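/- Let a = (a₁,…,aₙ) ∈ [1,∞)ⁿ. There exist φ₀, φ, ψ₀, ψ ∈ 𝓢(ℝⁿ) supported in the closed half-space {x ∈ ℝⁿ : xₙ ≥ 0}, with ∫φ₀ dx = 1 = ∫ψ₀ dx and with φ and ψ having vanishing moments of all orders, such that u = Σ_{j=0}^∞ ψ_j * (φ_j * u) in the weak* topology of 𝓢'(ℝⁿ) for every u ∈ 𝓢'(ℝⁿ). Consequently, the kernels k₀ := ψ₀*φ₀ and k := ψ*φ are Schwartz functions supported in {x : xₙ ≥ 0}, ∫k₀ dx = 1, k has vanishing moments of all orders, and u = Σ_{j=0}^∞ k_j * u in 𝓢'(ℝⁿ) for every u ∈ 𝓢'(ℝⁿ). -/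

import Mathlib

open MeasureTheory Filter Topology

noncomputable section

/-- Anisotropic dilation: `θ_0 = θ₀` and `θ_j(x) = 2^{j|a|} θ(2^{ja}x)` for `j ≥ 1`. -/
def anisoDil {m : ℕ} (a : Fin m → ℝ) (θ₀ θ : (Fin m → ℝ) → ℝ) (j : ℕ)
    (x : Fin m → ℝ) : ℝ :=
  if j = 0 then θ₀ x
  else (2:ℝ) ^ ((j:ℝ) * ∑ i, a i) * θ (fun i => (2:ℝ) ^ ((j:ℝ) * a i) * x i)

/-- `θ` has vanishing moments of all orders. -/
def VanishingMoments {m : ℕ} (θ : (Fin m → ℝ) → ℝ) : Prop :=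
  ∀ α : Fin m → ℕ, (∫ x : Fin m → ℝ, (∏ i, x i ^ α i) * θ x) = 0

/-!
By Parseval, the Gaussian times the Fourier transform of a truncated inverse Gaussian integrates to
zero against `exp (k s)` for every integer `k ≥ 1`. After the substitution `s = log x` it becomes,
up to the Jacobian and a constant factor, a Schwartz function on the half-line, flat at the origin,
with the moments of the Dirac mass. Its tensor power `A` has these moments and is supported in the
positive orthant. Let `B` be the dilate of `A` by `2 ^ (-a)` and let `p(x) = 3x² - 2x³`, evaluated
in the convolution algebra. Then `p(A) = ψ₀ ⋆ A` and `p(A) - p(B) = ψ ⋆ (A - B)`, where `ψ` has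
vanishing moments because `p'(1) = 0`. With `φ₀ = A` and `φ = A - B` the partial sums of `ψ_j ⋆ φ_j`
telescope to the dilates of `p(A)` by `2 ^ (N a)`, an approximate identity since `p(1) = 1`.
-/

open scoped SchwartzMap FourierTransform

/-! ### A Schwartz function on the half-line with the moments of the Dirac mass -/

section Family

variable {ι F : Type*} [NormedAddCommGroup F] [NormedSpace ℝ F]

lemma iteratedDeriv_eq_of_hasDerivAt_family {g : ι → ℝ → F} {d : ι → ι}
    (hd : ∀ i x, HasDerivAt (g i) (g (d i) x) x) (n : ℕ) (i : ι) :
    iteratedDeriv n (g i) = g (d^[n] i) := by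
  induction n with
  | zero => simp
  | succ n ih =>
    rw [iteratedDeriv_succ, ih, Function.iterate_succ_apply']
    exact funext fun x => (hd _ x).deriv

lemma exists_schwartzMap_of_hasDerivAt_family {g : ι → ℝ → F} {d : ι → ι}
    (hd : ∀ i x, HasDerivAt (g i) (g (d i) x) x)
    (hb : ∀ i k, ∃ C, ∀ x, |x| ^ k * ‖g i x‖ ≤ C) (i : ι) :
    ∃ f : 𝓢(ℝ, F), ⇑f = g i := by
  have hit := iteratedDeriv_eq_of_hasDerivAt_family hd
  refine ⟨⟨g i, contDiff_of_differentiable_iteratedDeriv fun m _ => ?_, fun k n => ?_⟩, rfl⟩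
  · rw [hit]
    exact fun x => (hd _ x).differentiableAt
  · obtain ⟨C, hC⟩ := hb (d^[n] i) k
    refine ⟨C, fun x => ?_⟩
    rw [norm_iteratedFDeriv_eq_norm_iteratedDeriv, hit]
    exact hC x

end Family

/-- `B` and all its exponential multiples `s ↦ exp (r * s) * B s` are Schwartz functions. Under the
substitution `s = log x` such functions become Schwartz functions on the half-line that are flat at
the origin, see `flatLog`. -/
def IsExpSchwartz (B : ℝ → ℝ) : Prop :=
  ∀ r : ℝ, ∃ f : 𝓢(ℝ, ℝ), ∀ s, f s = Real.exp (r * s) * B s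

/-- The function `B ∘ log` on `(0, ∞)`, extended by zero. -/
def flatLog (B : ℝ → ℝ) (x : ℝ) : ℝ :=
  if 0 < x then B (Real.log x) else 0

lemma flatLog_of_pos {B : ℝ → ℝ} {x : ℝ} (hx : 0 < x) : flatLog B x = B (Real.log x) :=
  if_pos hx

lemma flatLog_of_nonpos {B : ℝ → ℝ} {x : ℝ} (hx : x ≤ 0) : flatLog B x = 0 :=
  if_neg hx.not_gt

namespace IsExpSchwartz

variable {B w : ℝ → ℝ}

lemma exp_mul (hB : IsExpSchwartz B) (t : ℝ) :
    IsExpSchwartz fun s => Real.exp (t * s) * B s := fun r => by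
  obtain ⟨f, hf⟩ := hB (r + t)
  exact ⟨f, fun s => by rw [hf, add_mul, Real.exp_add, mul_assoc]⟩

lemma mul_hasTemperateGrowth (hB : IsExpSchwartz B) (hw : w.HasTemperateGrowth) :
    IsExpSchwartz fun s => B s * w s := fun r => by
  obtain ⟨f, hf⟩ := hB r
  refine ⟨SchwartzMap.smulLeftCLM ℝ w f, fun s => ?_⟩
  rw [SchwartzMap.smulLeftCLM_apply_apply hw, hf, smul_eq_mul]
  ring

lemma exists_schwartzMap (hB : IsExpSchwartz B) : ∃ f : 𝓢(ℝ, ℝ), ⇑f = B := by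
  obtain ⟨f, hf⟩ := hB 0
  exact ⟨f, funext fun s => by simp [hf]⟩

lemma hasDerivAt (hB : IsExpSchwartz B) (s : ℝ) : HasDerivAt B (deriv B s) s := by
  obtain ⟨f, rfl⟩ := hB.exists_schwartzMap
  exact f.differentiable.differentiableAt.hasDerivAt

protected lemma deriv (hB : IsExpSchwartz B) : IsExpSchwartz (deriv B) := fun r => by
  obtain ⟨f, hf⟩ := hB r
  refine ⟨SchwartzMap.derivCLM ℝ ℝ f - r • f, fun s => ?_⟩
  have hexp : HasDerivAt (fun s => Real.exp (r * s)) (Real.exp (r * s) * r) s := by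
    simpa using ((hasDerivAt_id s).const_mul r).exp
  have hderiv : deriv f s =
      Real.exp (r * s) * r * B s + Real.exp (r * s) * deriv B s := by
    rw [funext hf]
    exact (hexp.mul (hB.hasDerivAt s)).deriv
  rw [sub_apply, smul_apply, SchwartzMap.derivCLM_apply, hderiv, hf,
    smul_eq_mul]
  ring

lemma exists_exp_mul_abs_le (hB : IsExpSchwartz B) (r : ℝ) :
    ∃ C, 0 ≤ C ∧ ∀ s, Real.exp (r * s) * |B s| ≤ C := by
  obtain ⟨f, hf⟩ := hB r
  refine ⟨SchwartzMap.seminorm ℝ 0 0 f, apply_nonneg _ _, fun s => ?_⟩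
  simpa [hf, abs_mul] using f.norm_le_seminorm ℝ s

lemma exists_pow_mul_flatLog_le (hB : IsExpSchwartz B) (k : ℕ) :
    ∃ C, ∀ x, |x| ^ k * ‖flatLog B x‖ ≤ C := by
  obtain ⟨C, hC0, hC⟩ := hB.exists_exp_mul_abs_le k
  refine ⟨C, fun x => ?_⟩
  rcases lt_or_ge 0 x with hx | hx
  · have h := hC (Real.log x)
    rwa [Real.exp_nat_mul, Real.exp_log hx, ← abs_of_pos hx, Real.log_abs,
      ← flatLog_of_pos (B := B) hx] at h
  · simpa [flatLog_of_nonpos hx] using hC0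

lemma isBigO_flatLog_sq (hB : IsExpSchwartz B) (l : Filter ℝ) :
    flatLog B =O[l] fun x => x ^ 2 := by
  obtain ⟨C, hC0, hC⟩ := hB.exists_exp_mul_abs_le (-(2 : ℕ))
  refine Asymptotics.IsBigO.of_bound C (Eventually.of_forall fun x => ?_)
  rw [Real.norm_eq_abs, Real.norm_of_nonneg (sq_nonneg x)]
  rcases lt_or_ge 0 x with hx | hx
  · have h := hC (Real.log x)
    rw [neg_mul, Real.exp_neg, Real.exp_nat_mul, Real.exp_log hx, ← flatLog_of_pos (B := B) hx] at h
    rwa [inv_mul_le_iff₀ (by positivity), mul_comm] at h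
  · simpa [flatLog_of_nonpos hx] using mul_nonneg hC0 (sq_nonneg x)

lemma hasDerivAt_flatLog (hB : IsExpSchwartz B) (x : ℝ) :
    HasDerivAt (flatLog B) (flatLog (fun s => Real.exp (-1 * s) * deriv B s) x) x := by
  rcases lt_trichotomy x 0 with hx | rfl | hx
  · rw [flatLog_of_nonpos hx.le]
    refine (hasDerivAt_const x (0 : ℝ)).congr_of_eventuallyEq ?_
    filter_upwards [eventually_lt_nhds hx] with y hy
    exact flatLog_of_nonpos hy.le
  · rw [flatLog_of_nonpos le_rfl, hasDerivAt_iff_isLittleO]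
    simp only [flatLog_of_nonpos le_rfl, sub_zero, smul_zero]
    refine (hB.isBigO_flatLog_sq _).trans_isLittleO ?_
    simpa using Asymptotics.isLittleO_pow_pow (𝕜 := ℝ) one_lt_two
  · rw [flatLog_of_pos hx, neg_one_mul, Real.exp_neg, Real.exp_log hx, mul_comm]
    refine ((hB.hasDerivAt _).comp x (Real.hasDerivAt_log hx.ne')).congr_of_eventuallyEq ?_
    filter_upwards [eventually_gt_nhds hx] with y hy
    exact flatLog_of_pos hy

lemma exists_schwartzMap_flatLog (hB : IsExpSchwartz B) : ∃ f : 𝓢(ℝ, ℝ), ⇑f = flatLog B :=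
  exists_schwartzMap_of_hasDerivAt_family (ι := {B : ℝ → ℝ // IsExpSchwartz B})
    (g := fun B => flatLog B.1) (d := fun B => ⟨_, B.2.deriv.exp_mul (-1)⟩)
    (fun B => B.2.hasDerivAt_flatLog) (fun B => B.2.exists_pow_mul_flatLog_le) ⟨B, hB⟩

end IsExpSchwartz

lemma integral_flatLog (B : ℝ → ℝ) : ∫ x, flatLog B x = ∫ s, Real.exp s * B s := by
  have hsubst := integral_image_eq_integral_abs_deriv_smul MeasurableSet.univ
    (fun x _ => (Real.hasDerivAt_exp x).hasDerivWithinAt) Real.exp_injective.injOn (flatLog B)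
  rw [Set.image_univ, Real.range_exp, setIntegral_univ] at hsubst
  rw [← setIntegral_eq_integral_of_forall_compl_eq_zero (s := Set.Ioi 0)
    fun x hx => flatLog_of_nonpos (not_lt.1 hx), hsubst]
  simp [flatLog_of_pos (Real.exp_pos _)]

lemma integral_pow_mul_flatLog (B : ℝ → ℝ) (k : ℕ) :
    ∫ x, x ^ k * flatLog B x = ∫ s, Real.exp s * (Real.exp (k * s) * B s) := by
  rw [← integral_flatLog]
  congr 1 with x
  rcases lt_or_ge 0 x with hx | hx
  · rw [flatLog_of_pos hx, flatLog_of_pos hx, Real.exp_nat_mul, Real.exp_log hx]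
  · rw [flatLog_of_nonpos hx, flatLog_of_nonpos hx, mul_zero]

/-! ### Gaussian moments -/

lemma abs_pow_mul_exp_sub_sq_le (r : ℝ) (k : ℕ) (s : ℝ) :
    |s| ^ k * Real.exp (r * s - Real.pi * s ^ 2) ≤ k.factorial * Real.exp ((1 + |r|) ^ 2) := by
  have hpow : |s| ^ k ≤ k.factorial * Real.exp |s| := by
    rw [← div_le_iff₀' (by positivity)]
    exact Real.pow_div_factorial_le_exp _ (abs_nonneg s) k
  have hquad : |s| + (r * s - Real.pi * s ^ 2) ≤ (1 + |r|) ^ 2 := by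
    have hrs : r * s ≤ |r| * |s| := (le_abs_self _).trans_eq (abs_mul r s)
    nlinarith [sq_nonneg ((1 + |r|) - |s|), sq_abs s, Real.pi_gt_three, sq_nonneg s]
  calc |s| ^ k * Real.exp (r * s - Real.pi * s ^ 2)
      ≤ k.factorial * Real.exp |s| * Real.exp (r * s - Real.pi * s ^ 2) := by gcongr
    _ = k.factorial * Real.exp (|s| + (r * s - Real.pi * s ^ 2)) := by
      rw [mul_assoc, ← Real.exp_add]
    _ ≤ k.factorial * Real.exp ((1 + |r|) ^ 2) := by gcongr

lemma exists_abs_pow_mul_eval_mul_exp_sub_sq_le (r : ℝ) (p : Polynomial ℝ) (k : ℕ) :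
    ∃ C, ∀ s : ℝ, |s| ^ k * ‖p.eval s * Real.exp (r * s - Real.pi * s ^ 2)‖ ≤ C := by
  induction p using Polynomial.induction_on' with
  | add p q hp hq =>
    obtain ⟨C, hC⟩ := hp
    obtain ⟨D, hD⟩ := hq
    refine ⟨C + D, fun s => le_trans ?_ (add_le_add (hC s) (hD s))⟩
    rw [Polynomial.eval_add, add_mul, ← mul_add]
    gcongr
    exact norm_add_le _ _
  | monomial n c =>
    refine ⟨|c| * ((k + n).factorial * Real.exp ((1 + |r|) ^ 2)), fun s => ?_⟩
    calc |s| ^ k * ‖(Polynomial.monomial n c).eval s * Real.exp (r * s - Real.pi * s ^ 2)‖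
        = |c| * (|s| ^ (k + n) * Real.exp (r * s - Real.pi * s ^ 2)) := by
          simp only [Polynomial.eval_monomial, norm_mul, Real.norm_eq_abs, abs_pow, Real.abs_exp]
          ring
      _ ≤ _ := mul_le_mul_of_nonneg_left (abs_pow_mul_exp_sub_sq_le r (k + n) s) (abs_nonneg c)

lemma hasDerivAt_eval_mul_exp_sub_sq (r : ℝ) (p : Polynomial ℝ) (s : ℝ) :
    HasDerivAt (fun s => p.eval s * Real.exp (r * s - Real.pi * s ^ 2))
      ((p.derivative + (.C r - .C (2 * Real.pi) * .X) * p).eval s *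
        Real.exp (r * s - Real.pi * s ^ 2)) s := by
  have hexponent : HasDerivAt (fun s => r * s - Real.pi * s ^ 2) (r - Real.pi * (2 * s)) s := by
    simpa using ((hasDerivAt_id s).const_mul r).fun_sub
      (((hasDerivAt_id s).pow 2).const_mul Real.pi)
  refine ((p.hasDerivAt s).mul hexponent.exp).congr_deriv ?_
  simp only [Polynomial.eval_add, Polynomial.eval_sub, Polynomial.eval_mul, Polynomial.eval_C,
    Polynomial.eval_X]
  ring

lemma isExpSchwartz_gaussian : IsExpSchwartz fun s => Real.exp (-Real.pi * s ^ 2) := fun r => by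
  obtain ⟨f, hf⟩ := exists_schwartzMap_of_hasDerivAt_family (hasDerivAt_eval_mul_exp_sub_sq r)
    (exists_abs_pow_mul_eval_mul_exp_sub_sq_le r) 1
  refine ⟨f, fun s => ?_⟩
  rw [hf, ← Real.exp_add]
  simp [sub_eq_add_neg]

section Fourier

variable {V E : Type*} [NormedAddCommGroup V] [InnerProductSpace ℝ V] [MeasurableSpace V]
  [BorelSpace V] [FiniteDimensional ℝ V] [NormedAddCommGroup E] [NormedSpace ℂ E]

lemma hasTemperateGrowth_fourier {f : V → E} (hf : AEStronglyMeasurable f)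
    (hint : ∀ n : ℕ, Integrable fun v => ‖v‖ ^ n * ‖f v‖) : (𝓕 f).HasTemperateGrowth := by
  have hint' : ∀ n : ℕ, (n : ℕ∞) ≤ ⊤ → Integrable fun v => ‖v‖ ^ n * ‖f v‖ := fun n _ => hint n
  refine ⟨Real.contDiff_fourier hint', fun n =>
    ⟨0, ∫ v, (2 * Real.pi * ‖innerSL (E := V) ℝ‖) ^ n * (‖v‖ ^ n * ‖f v‖), fun x => ?_⟩⟩
  rw [Real.iteratedFDeriv_fourier hint' hf le_top, pow_zero, mul_one]
  refine (VectorFourier.norm_fourierIntegral_le_integral_norm _ _ _ _ _).trans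
    (integral_mono_of_nonneg (ae_of_all _ fun v => norm_nonneg _) ((hint n).const_mul _)
      (ae_of_all _ fun v => ?_))
  exact (VectorFourier.norm_fourierPowSMulRight_le _ f v n).trans_eq (mul_assoc _ _ _)

end Fourier

/-- The function `t ↦ exp (π t²)` cut off to one period `[-π, π]` of the characters `exp (-i k t)`.
Multiplied by the Fourier transform of `s ↦ exp (k s - π s²)` it becomes a multiple of such a
character. -/
def truncatedGaussianInv : ℝ → ℂ :=
  (Set.Ioc (-Real.pi) Real.pi).indicator fun t => Real.exp (Real.pi * t ^ 2)

lemma integrable_pow_mul_truncatedGaussianInv (n : ℕ) :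
    Integrable fun t => ‖t‖ ^ n * ‖truncatedGaussianInv t‖ := by
  have hcont : Continuous fun t : ℝ => ‖t‖ ^ n * ‖(Real.exp (Real.pi * t ^ 2) : ℂ)‖ := by fun_prop
  have hind := (hcont.integrableOn_Ioc (μ := volume) (a := -Real.pi)
    (b := Real.pi)).integrable_indicator measurableSet_Ioc
  refine hind.congr (ae_of_all _ fun t => ?_)
  by_cases ht : t ∈ Set.Ioc (-Real.pi) Real.pi <;> simp [truncatedGaussianInv, ht]

lemma aestronglyMeasurable_truncatedGaussianInv : AEStronglyMeasurable truncatedGaussianInv :=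
  (Continuous.aestronglyMeasurable (by fun_prop)).indicator measurableSet_Ioc

lemma integrable_truncatedGaussianInv : Integrable truncatedGaussianInv :=
  (integrable_norm_iff aestronglyMeasurable_truncatedGaussianInv).1 <| by
    simpa using integrable_pow_mul_truncatedGaussianInv 0

lemma hasTemperateGrowth_fourier_truncatedGaussianInv :
    (𝓕 truncatedGaussianInv).HasTemperateGrowth :=
  hasTemperateGrowth_fourier aestronglyMeasurable_truncatedGaussianInv
    integrable_pow_mul_truncatedGaussianInv

lemma integrable_exp_mul_gaussian (r : ℝ) :
    Integrable fun s => Real.exp (r * s) * Real.exp (-Real.pi * s ^ 2) := by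
  obtain ⟨g, hg⟩ := isExpSchwartz_gaussian r
  exact g.integrable.congr (ae_of_all _ hg)

lemma integral_exp_neg_natCast_mul_I (k : ℕ) :
    ∫ t in -Real.pi..Real.pi, Complex.exp (-(k * Complex.I) * t) =
      if k = 0 then 2 * (Real.pi : ℂ) else 0 := by
  split_ifs with hk
  · subst hk
    simp [two_mul]
  · have hk' : -(k * Complex.I) ≠ 0 := by simpa using hk
    rw [integral_exp_mul_complex hk', div_eq_zero_iff, sub_eq_zero]
    refine .inl (Complex.exp_eq_exp_iff_exists_int.2 ⟨-k, ?_⟩)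
    push_cast
    ring

lemma fourier_exp_mul_gaussian (k : ℕ) (t : ℝ) :
    𝓕 (fun s : ℝ => ((Real.exp (k * s) * Real.exp (-Real.pi * s ^ 2) : ℝ) : ℂ)) t =
      Real.exp (k ^ 2 / (4 * Real.pi)) * Complex.exp (-(k * Complex.I) * t) *
        Real.exp (-Real.pi * t ^ 2) := by
  have hpi : (Real.pi : ℂ) ≠ 0 := Complex.ofReal_ne_zero.2 Real.pi_ne_zero
  have hquad : (fun s : ℝ => ((Real.exp (k * s) * Real.exp (-Real.pi * s ^ 2) : ℝ) : ℂ)) =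
      fun s : ℝ => Complex.exp (-Real.pi * 1 * s ^ 2 + 2 * Real.pi * (k / (2 * Real.pi)) * s) := by
    funext s
    push_cast
    rw [← Complex.exp_add]
    congr 1
    field_simp
    ring
  simp only [hquad, fourier_gaussian_pi' (b := 1) (by simp), Complex.one_cpow, div_one, one_mul]
  push_cast
  rw [← Complex.exp_add, ← Complex.exp_add]
  congr 1
  field_simp
  ring_nf
  rw [Complex.I_sq]
  ring

lemma integral_exp_mul_gaussian_mul_fourier (k : ℕ) :
    ∫ s : ℝ, 𝓕 truncatedGaussianInv s *
        ((Real.exp (k * s) * Real.exp (-Real.pi * s ^ 2) : ℝ) : ℂ) =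
      if k = 0 then 2 * (Real.pi : ℂ) else 0 := by
  have hflip := VectorFourier.integral_fourierIntegral_smul_eq_flip (L := innerₗ ℝ)
    Real.continuous_fourierChar continuous_inner integrable_truncatedGaussianInv
    ((integrable_exp_mul_gaussian k).ofReal (𝕜 := ℂ))
  rw [flip_innerₗ] at hflip
  have hpair (t : ℝ) : truncatedGaussianInv t *
      𝓕 (fun s : ℝ => ((Real.exp (k * s) * Real.exp (-Real.pi * s ^ 2) : ℝ) : ℂ)) t =
      (Set.Ioc (-Real.pi) Real.pi).indicator (fun t =>
        Real.exp (k ^ 2 / (4 * Real.pi)) * Complex.exp (-(k * Complex.I) * t)) t := by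
    rw [truncatedGaussianInv, ← Set.indicator_mul_left]
    congr 1 with t
    rw [fourier_exp_mul_gaussian, mul_left_comm, ← Complex.ofReal_mul, ← Real.exp_add]
    simp
  calc _ = ∫ t, truncatedGaussianInv t *
        𝓕 (fun s : ℝ => ((Real.exp (k * s) * Real.exp (-Real.pi * s ^ 2) : ℝ) : ℂ)) t := hflip
    _ = Real.exp (k ^ 2 / (4 * Real.pi)) *
        ∫ t in -Real.pi..Real.pi, Complex.exp (-(k * Complex.I) * t) := by
      simp_rw [hpair]
      rw [integral_indicator measurableSet_Ioc, integral_const_mul,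
        intervalIntegral.integral_of_le (by linarith [Real.pi_pos])]
    _ = _ := by
      rw [integral_exp_neg_natCast_mul_I]
      split_ifs with hk <;> simp [hk]

lemma integral_exp_mul_gaussian_mul_re_fourier (k : ℕ) :
    ∫ s, Real.exp (k * s) * (Real.exp (-Real.pi * s ^ 2) * (𝓕 truncatedGaussianInv s).re) =
      if k = 0 then 2 * Real.pi else 0 := by
  have hre (s : ℝ) : Real.exp (k * s) *
      (Real.exp (-Real.pi * s ^ 2) * (𝓕 truncatedGaussianInv s).re) =
      (𝓕 truncatedGaussianInv s *
        ((Real.exp (k * s) * Real.exp (-Real.pi * s ^ 2) : ℝ) : ℂ)).re := by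
    rw [Complex.re_mul_ofReal]
    ring
  have hint : Integrable fun s : ℝ => 𝓕 truncatedGaussianInv s *
      ((Real.exp (k * s) * Real.exp (-Real.pi * s ^ 2) : ℝ) : ℂ) :=
    (integrable_exp_mul_gaussian k).ofReal.bdd_mul
      hasTemperateGrowth_fourier_truncatedGaussianInv.1.continuous.aestronglyMeasurable
      (ae_of_all _ (VectorFourier.norm_fourierIntegral_le_integral_norm _ _ _ _))
  simp_rw [hre]
  refine (integral_re hint).trans ?_
  rw [integral_exp_mul_gaussian_mul_fourier]
  split_ifs <;> simp

lemma isExpSchwartz_gaussian_mul_re_fourier :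
    IsExpSchwartz fun s => Real.exp (-Real.pi * s ^ 2) * (𝓕 truncatedGaussianInv s).re :=
  isExpSchwartz_gaussian.mul_hasTemperateGrowth <|
    Complex.reCLM.hasTemperateGrowth.comp hasTemperateGrowth_fourier_truncatedGaussianInv

lemma exists_schwartzMap_halfLine_dirac_moments :
    ∃ g : 𝓢(ℝ, ℝ), (∀ x ≤ 0, g x = 0) ∧ ∀ k : ℕ, ∫ x, x ^ k * g x = if k = 0 then 1 else 0 := by
  obtain ⟨g, hg⟩ :=
    (isExpSchwartz_gaussian_mul_re_fourier.exp_mul (-1)).exists_schwartzMap_flatLog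
  refine ⟨(2 * Real.pi)⁻¹ • g, fun x hx => by simp [hg, flatLog_of_nonpos hx], fun k => ?_⟩
  have hcancel (s b : ℝ) :
      Real.exp s * (Real.exp (k * s) * (Real.exp (-1 * s) * b)) = Real.exp (k * s) * b := by
    rw [neg_one_mul, Real.exp_neg]
    field_simp
  simp_rw [smul_apply, smul_eq_mul, mul_left_comm _ (2 * Real.pi)⁻¹, hg]
  rw [integral_const_mul, integral_pow_mul_flatLog]
  simp_rw [hcancel, integral_exp_mul_gaussian_mul_re_fourier]
  split_ifs
  · exact inv_mul_cancel₀ (by positivity)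
  · exact mul_zero _

/-! ### Tensor powers -/

lemma exists_one_add_pow_mul_iteratedFDeriv_le {E F : Type*} [NormedAddCommGroup E]
    [NormedSpace ℝ E] [NormedAddCommGroup F] [NormedSpace ℝ F] (f : 𝓢(E, F)) (k n : ℕ) :
    ∃ C : ℝ, 0 ≤ C ∧ ∀ x, (1 + ‖x‖) ^ k * ‖iteratedFDeriv ℝ n f x‖ ≤ C :=
  ⟨2 ^ k * (Finset.Iic (k, n)).sup (fun m => SchwartzMap.seminorm ℝ m.1 m.2) f,
    mul_nonneg (by positivity) (apply_nonneg _ _),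
    SchwartzMap.one_add_le_sup_seminorm_apply (𝕜 := ℝ) (m := (k, n)) le_rfl le_rfl f⟩

section TensorPower

variable {ι : Type*} [Fintype ι]

lemma pi_norm_le_prod_one_add {E : ι → Type*} [∀ i, SeminormedAddCommGroup (E i)]
    (x : ∀ i, E i) : ‖x‖ ≤ ∏ i, (1 + ‖x i‖) := by
  have hone (i : ι) : 1 ≤ 1 + ‖x i‖ := le_add_of_nonneg_right (norm_nonneg _)
  refine (pi_norm_le_iff_of_nonneg (Finset.prod_nonneg fun i _ => by positivity)).2 fun i => ?_
  calc ‖x i‖ ≤ ∏ j ∈ {i}, (1 + ‖x j‖) := by simp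
    _ ≤ ∏ j, (1 + ‖x j‖) := Finset.prod_le_prod_of_subset_of_one_le
        (Finset.subset_univ _) (fun i _ => by positivity) (fun j _ _ => hone j)

lemma norm_iteratedFDeriv_comp_le_of_norm_le_one {D E F : Type*} [NormedAddCommGroup D]
    [NormedSpace ℝ D] [NormedAddCommGroup E] [NormedSpace ℝ E] [NormedAddCommGroup F]
    [NormedSpace ℝ F] {n : ℕ} {f : E → F} (hf : ContDiff ℝ n f) (L : D →L[ℝ] E) (hL : ‖L‖ ≤ 1)
    (x : D) : ‖iteratedFDeriv ℝ n (f ∘ L) x‖ ≤ ‖iteratedFDeriv ℝ n f (L x)‖ := by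
  rw [L.iteratedFDeriv_comp_right hf x le_rfl]
  exact (ContinuousMultilinearMap.norm_compContinuousLinearMap_le _ _).trans
    (mul_le_of_le_one_right (norm_nonneg _)
      (Finset.prod_le_one (fun _ _ => norm_nonneg _) fun _ _ => hL))

lemma norm_iteratedFDeriv_comp_proj_le (g : 𝓢(ℝ, ℝ)) (i : ι) (n : ℕ) (x : ι → ℝ) :
    ‖iteratedFDeriv ℝ n (fun x : ι → ℝ => g (x i)) x‖ ≤ ‖iteratedFDeriv ℝ n g (x i)‖ :=
  norm_iteratedFDeriv_comp_le_of_norm_le_one (g.smooth n)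
    (.proj (R := ℝ) (φ := fun _ : ι => ℝ) i)
    (ContinuousLinearMap.opNorm_le_bound _ zero_le_one fun y => by simpa using norm_le_pi_norm y i)
    x

variable (ι) in
/-- The tensor power `x ↦ ∏ i, g (x i)` of a Schwartz function on the line. -/
def schwartzTensorPower (g : 𝓢(ℝ, ℝ)) : 𝓢(ι → ℝ, ℝ) where
  toFun x := ∏ i, g (x i)
  smooth' := contDiff_prod fun i _ => (g.smooth _).comp (contDiff_apply ℝ ℝ i)
  decay' k n := by
    classical
    choose C _ hC using exists_one_add_pow_mul_iteratedFDeriv_le g k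
    refine ⟨∑ p ∈ (Finset.univ : Finset ι).sym n,
      (p : Multiset ι).countPerms * ∏ i, C ((p : Multiset ι).count i), fun x => ?_⟩
    have hLeibniz := norm_iteratedFDeriv_prod_le (𝕜 := ℝ) (u := Finset.univ) (N := n)
      (f := fun (i : ι) (x : ι → ℝ) => g (x i))
      (fun i _ => (g.smooth n).comp (contDiff_apply ℝ ℝ i)) (x := x) (n := n) le_rfl
    refine (mul_le_mul_of_nonneg_left hLeibniz (by positivity)).trans ?_
    rw [Finset.mul_sum]
    refine Finset.sum_le_sum fun p _ => ?_
    rw [mul_left_comm]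
    refine mul_le_mul_of_nonneg_left ?_ (by positivity)
    calc ‖x‖ ^ k * ∏ i, ‖iteratedFDeriv ℝ ((p : Multiset ι).count i)
            (fun x : ι → ℝ => g (x i)) x‖
        ≤ (∏ i, (1 + ‖x i‖)) ^ k *
            ∏ i, ‖iteratedFDeriv ℝ ((p : Multiset ι).count i) g (x i)‖ := by
          gcongr
          · exact pi_norm_le_prod_one_add x
          · exact norm_iteratedFDeriv_comp_proj_le g _ _ x
      _ = ∏ i, (1 + ‖x i‖) ^ k * ‖iteratedFDeriv ℝ ((p : Multiset ι).count i) g (x i)‖ := by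
          rw [Finset.prod_mul_distrib, Finset.prod_pow]
      _ ≤ ∏ i, C ((p : Multiset ι).count i) :=
          Finset.prod_le_prod (fun _ _ => by positivity) fun i _ => hC _ (x i)

lemma schwartzTensorPower_apply (g : 𝓢(ℝ, ℝ)) (x : ι → ℝ) :
    schwartzTensorPower ι g x = ∏ i, g (x i) := rfl

end TensorPower

/-! ### Averages of translates -/

section Average

lemma norm_le_one_add_norm_add_mul_one_add_norm {E : Type*} [SeminormedAddCommGroup E] (x v : E) :
    ‖x‖ ≤ (1 + ‖x + v‖) * (1 + ‖v‖) := by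
  have htri : ‖x‖ ≤ ‖x + v‖ + ‖v‖ := by simpa using norm_sub_le (x + v) v
  nlinarith [mul_nonneg (norm_nonneg (x + v)) (norm_nonneg v)]

variable {D E F : Type*} [NormedAddCommGroup D] [NormedSpace ℝ D] [MeasurableSpace D]
  [BorelSpace D] [SecondCountableTopology D] {μ : Measure D}
  [NormedAddCommGroup E] [NormedSpace ℝ E] [NormedAddCommGroup F] [NormedSpace ℝ F]

section Integrand

variable {K : D → ℝ}

lemma integrable_smul_comp_add (hK : Integrable K μ) (L : D →L[ℝ] E) {h : E → F}
    (hc : Continuous h) {C : ℝ} (hb : ∀ x, ‖h x‖ ≤ C) (x : E) :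
    Integrable (fun w => K w • h (x + L w)) μ :=
  hK.smul_bdd C (hc.comp (continuous_const.add L.continuous)).aestronglyMeasurable
    (ae_of_all _ fun _ => hb _)

lemma hasFDerivAt_integral_smul_comp_add (hK : Integrable K μ) (L : D →L[ℝ] E) {h : E → F}
    (hd : ContDiff ℝ 1 h) {C C' : ℝ} (hb : ∀ x, ‖h x‖ ≤ C) (hb' : ∀ x, ‖fderiv ℝ h x‖ ≤ C')
    (x : E) :
    HasFDerivAt (fun x => ∫ w, K w • h (x + L w) ∂μ) (∫ w, K w • fderiv ℝ h (x + L w) ∂μ) x := by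
  refine hasFDerivAt_integral_of_dominated_of_fderiv_le (s := Set.univ)
    (F' := fun x w => K w • fderiv ℝ h (x + L w)) (bound := fun w => ‖K w‖ * C') univ_mem
    (Eventually.of_forall fun y =>
      (integrable_smul_comp_add hK L hd.continuous hb y).aestronglyMeasurable)
    (integrable_smul_comp_add hK L hd.continuous hb x)
    (integrable_smul_comp_add hK L (hd.continuous_fderiv one_ne_zero) hb' x).aestronglyMeasurable
    (ae_of_all _ fun w y _ => ?_) (hK.norm.mul_const C') (ae_of_all _ fun w y _ => ?_)
  · rw [norm_smul]
    gcongr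
    exact hb' _
  · exact ((hasFDerivAt_comp_add_right (L w)).2
      (hd.differentiable one_ne_zero _).hasFDerivAt).const_smul (K w)

lemma integrable_smul_fderiv_comp_add_apply (hK : Integrable K μ) (L : D →L[ℝ] E) {h : E → F}
    (hd : ContDiff ℝ 1 h) {C : ℝ} (hb : ∀ x, ‖fderiv ℝ h x‖ ≤ C) (x v : E) :
    Integrable (fun w => K w • fderiv ℝ h (x + L w) v) μ :=
  (integrable_smul_comp_add hK L (hd.continuous_fderiv one_ne_zero) hb x
    ).apply_continuousLinearMap v

lemma fderiv_integral_smul_comp_add_apply (hK : Integrable K μ) (L : D →L[ℝ] E) {h : E → F}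
    (hd : ContDiff ℝ 1 h) {C C' : ℝ} (hb : ∀ x, ‖h x‖ ≤ C) (hb' : ∀ x, ‖fderiv ℝ h x‖ ≤ C')
    (x v : E) :
    fderiv ℝ (fun x => ∫ w, K w • h (x + L w) ∂μ) x v =
      ∫ w, K w • fderiv ℝ h (x + L w) v ∂μ := by
  rw [(hasFDerivAt_integral_smul_comp_add hK L hd hb hb' x).fderiv,
    ContinuousLinearMap.integral_apply
      (integrable_smul_comp_add hK L (hd.continuous_fderiv one_ne_zero) hb' x)]
  rfl

lemma exists_norm_iteratedFDeriv_le (η : 𝓢(E, F)) (n : ℕ) :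
    ∃ C, ∀ x, ‖iteratedFDeriv ℝ n η x‖ ≤ C := by
  obtain ⟨C, -, hC⟩ := exists_one_add_pow_mul_iteratedFDeriv_le η 0 n
  exact ⟨C, fun x => by simpa using hC x⟩

lemma exists_norm_fderiv_iteratedFDeriv_le (η : 𝓢(E, F)) (n : ℕ) :
    ∃ C, ∀ x, ‖fderiv ℝ (iteratedFDeriv ℝ n η) x‖ ≤ C := by
  obtain ⟨C, hC⟩ := exists_norm_iteratedFDeriv_le η (n + 1)
  exact ⟨C, fun x => norm_fderiv_iteratedFDeriv.trans_le (hC x)⟩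

lemma contDiff_one_iteratedFDeriv (η : 𝓢(E, F)) (n : ℕ) :
    ContDiff ℝ 1 (iteratedFDeriv ℝ n η) :=
  (η.smooth ⊤).iteratedFDeriv_right (by exact_mod_cast le_top)

lemma integrable_smul_iteratedFDeriv (hK : Integrable K μ) (L : D →L[ℝ] E) (η : 𝓢(E, F)) (n : ℕ)
    (x : E) : Integrable (fun w => K w • iteratedFDeriv ℝ n η (x + L w)) μ := by
  obtain ⟨C, hC⟩ := exists_norm_iteratedFDeriv_le η n
  exact integrable_smul_comp_add hK L (contDiff_one_iteratedFDeriv η n).continuous hC x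

lemma hasFDerivAt_integral_smul_iteratedFDeriv (hK : Integrable K μ) (L : D →L[ℝ] E)
    (η : 𝓢(E, F)) (n : ℕ) (x : E) :
    HasFDerivAt (fun x => ∫ w, K w • iteratedFDeriv ℝ n η (x + L w) ∂μ)
      (∫ w, K w • fderiv ℝ (iteratedFDeriv ℝ n η) (x + L w) ∂μ) x := by
  obtain ⟨C, hC⟩ := exists_norm_iteratedFDeriv_le η n
  obtain ⟨C', hC'⟩ := exists_norm_fderiv_iteratedFDeriv_le η n
  exact hasFDerivAt_integral_smul_comp_add hK L (contDiff_one_iteratedFDeriv η n) hC hC' x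

lemma iteratedFDeriv_integral_smul_comp_add (hK : Integrable K μ) (L : D →L[ℝ] E) (η : 𝓢(E, F))
    (n : ℕ) :
    iteratedFDeriv ℝ n (fun x => ∫ w, K w • η (x + L w) ∂μ) =
      fun x => ∫ w, K w • iteratedFDeriv ℝ n η (x + L w) ∂μ := by
  induction n with
  | zero =>
    funext x
    simp only [iteratedFDeriv_zero_eq_comp, Function.comp_apply, ← map_smul]
    exact ((continuousMultilinearCurryFin0 ℝ E F).symm.toContinuousLinearEquiv
      |>.integral_comp_comm _).symm
  | succ n ih =>
    funext x
    ext v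
    obtain ⟨C, hC⟩ := exists_norm_iteratedFDeriv_le η n
    obtain ⟨C', hC'⟩ := exists_norm_fderiv_iteratedFDeriv_le η n
    have hη := contDiff_one_iteratedFDeriv η n
    rw [iteratedFDeriv_succ_apply_left, ih, fderiv_integral_smul_comp_add_apply hK L hη hC hC',
      ContinuousMultilinearMap.integral_apply
        (integrable_smul_fderiv_comp_add_apply hK L hη hC' x (v 0)),
      ContinuousMultilinearMap.integral_apply (integrable_smul_iteratedFDeriv hK L η (n + 1) x)]
    rfl

end Integrand

lemma integrable_one_add_pow_mul [μ.HasTemperateGrowth] (K : 𝓢(D, F)) (k : ℕ) :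
    Integrable (fun w => (1 + ‖w‖) ^ k * ‖K w‖) μ := by
  have hdom := ((K.integrable (μ := μ)).norm.add (K.integrable_pow_mul μ k)).const_mul
    ((2 : ℝ) ^ (k - 1))
  refine hdom.mono' (by have := K.continuous; fun_prop) (ae_of_all _ fun w => ?_)
  rw [Real.norm_of_nonneg (by positivity)]
  calc (1 + ‖w‖) ^ k * ‖K w‖ ≤ (2 ^ (k - 1) * (1 ^ k + ‖w‖ ^ k)) * ‖K w‖ := by
        gcongr
        exact add_pow_le zero_le_one (norm_nonneg _) k
    _ = _ := by simp only [Pi.add_apply, one_pow]; ring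

lemma mul_norm_integral_smul_le [μ.HasTemperateGrowth] (K : 𝓢(D, ℝ)) {h : D → F} {r c : ℝ}
    {d : ℕ} (hr : 0 ≤ r) (hb : ∀ w, r * ‖h w‖ ≤ c * (1 + ‖w‖) ^ d) :
    r * ‖∫ w, K w • h w ∂μ‖ ≤ c * ∫ w, (1 + ‖w‖) ^ d * ‖K w‖ ∂μ := by
  rw [← integral_const_mul, ← Real.norm_of_nonneg hr, ← norm_smul, ← integral_smul]
  refine norm_integral_le_of_norm_le ((integrable_one_add_pow_mul K d).const_mul c)
    (ae_of_all _ fun w => ?_)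
  calc ‖r • (K w • h w)‖ = ‖K w‖ * (r * ‖h w‖) := by
        rw [norm_smul, norm_smul, Real.norm_of_nonneg hr, mul_left_comm]
    _ ≤ ‖K w‖ * (c * (1 + ‖w‖) ^ d) := mul_le_mul_of_nonneg_left (hb w) (norm_nonneg _)
    _ = c * ((1 + ‖w‖) ^ d * ‖K w‖) := by ring

variable (μ) in
/-- The average `x ↦ ∫ K(w) η(x + L w) dμ(w)` of translates of a Schwartz function `η`. For
`L = -id` it is a convolution, and for `L → 0` it tends to a multiple of `η`. -/
def schwartzAverage [μ.HasTemperateGrowth] (K : 𝓢(D, ℝ)) (L : D →L[ℝ] E) (η : 𝓢(E, F)) :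
    𝓢(E, F) where
  toFun x := ∫ w, K w • η (x + L w) ∂μ
  smooth' := contDiff_of_differentiable_iteratedFDeriv fun n _ => by
    rw [iteratedFDeriv_integral_smul_comp_add K.integrable L η n]
    exact fun x =>
      (hasFDerivAt_integral_smul_iteratedFDeriv K.integrable L η n x).differentiableAt
  decay' k n := by
    obtain ⟨S, -, hS⟩ := exists_one_add_pow_mul_iteratedFDeriv_le η k n
    refine ⟨(1 + ‖L‖) ^ k * S * ∫ w, (1 + ‖w‖) ^ k * ‖K w‖ ∂μ, fun x => ?_⟩
    rw [iteratedFDeriv_integral_smul_comp_add K.integrable L η n]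
    refine mul_norm_integral_smul_le K (by positivity) fun w => ?_
    have hx : ‖x‖ ≤ (1 + ‖x + L w‖) * ((1 + ‖L‖) * (1 + ‖w‖)) := by
      refine (norm_le_one_add_norm_add_mul_one_add_norm x (L w)).trans ?_
      gcongr
      nlinarith [norm_nonneg w, norm_nonneg L, L.le_opNorm w]
    calc ‖x‖ ^ k * ‖iteratedFDeriv ℝ n η (x + L w)‖
        ≤ ((1 + ‖x + L w‖) * ((1 + ‖L‖) * (1 + ‖w‖))) ^ k *
          ‖iteratedFDeriv ℝ n η (x + L w)‖ := by gcongr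
      _ = (1 + ‖L‖) ^ k * ((1 + ‖x + L w‖) ^ k * ‖iteratedFDeriv ℝ n η (x + L w)‖) *
          (1 + ‖w‖) ^ k := by rw [mul_pow, mul_pow]; ring
      _ ≤ (1 + ‖L‖) ^ k * S * (1 + ‖w‖) ^ k := by
          gcongr
          exact hS _

lemma exists_pow_mul_norm_iteratedFDeriv_sub_le (η : 𝓢(E, F)) (k n : ℕ) :
    ∃ S, 0 ≤ S ∧ ∀ x v, ‖x‖ ^ k * ‖iteratedFDeriv ℝ n η (x + v) - iteratedFDeriv ℝ n η x‖ ≤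
      S * (1 + ‖v‖) ^ k * ‖v‖ := by
  obtain ⟨S, hS0, hS⟩ := exists_one_add_pow_mul_iteratedFDeriv_le η k (n + 1)
  refine ⟨S, hS0, fun x v => ?_⟩
  rcases (pow_nonneg (norm_nonneg x) k).eq_or_lt with hx | hx
  · rw [← hx, zero_mul]
    positivity
  have hbound : ∀ y ∈ segment ℝ x (x + v),
      ‖fderiv ℝ (iteratedFDeriv ℝ n η) y‖ ≤ S * (1 + ‖v‖) ^ k / ‖x‖ ^ k := by
    intro y hy
    rw [segment_eq_image'] at hy
    obtain ⟨t, ⟨ht0, ht1⟩, rfl⟩ := hy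
    simp only [add_sub_cancel_left]
    have htv : ‖t • v‖ ≤ ‖v‖ := by
      rw [norm_smul, Real.norm_of_nonneg ht0]
      exact mul_le_of_le_one_left (norm_nonneg _) ht1
    rw [norm_fderiv_iteratedFDeriv, le_div_iff₀' hx]
    calc ‖x‖ ^ k * ‖iteratedFDeriv ℝ (n + 1) η (x + t • v)‖
        ≤ ((1 + ‖x + t • v‖) * (1 + ‖v‖)) ^ k * ‖iteratedFDeriv ℝ (n + 1) η (x + t • v)‖ := by
          gcongr
          refine (norm_le_one_add_norm_add_mul_one_add_norm x (t • v)).trans ?_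
          gcongr
      _ = ((1 + ‖x + t • v‖) ^ k * ‖iteratedFDeriv ℝ (n + 1) η (x + t • v)‖) *
          (1 + ‖v‖) ^ k := by rw [mul_pow]; ring
      _ ≤ S * (1 + ‖v‖) ^ k := by
          gcongr
          exact hS _
  have hmvt := Convex.norm_image_sub_le_of_norm_hasFDerivWithin_le
    (fun y _ => ((contDiff_one_iteratedFDeriv η n).differentiable one_ne_zero
      y).hasFDerivAt.hasFDerivWithinAt) hbound (convex_segment _ _)
    (left_mem_segment ℝ x (x + v)) (right_mem_segment ℝ x (x + v))
  rwa [add_sub_cancel_left, div_mul_eq_mul_div, le_div_iff₀' hx] at hmvt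

variable [μ.HasTemperateGrowth]

lemma schwartzAverage_apply (K : 𝓢(D, ℝ)) (L : D →L[ℝ] E) (η : 𝓢(E, F)) (x : E) :
    schwartzAverage μ K L η x = ∫ w, K w • η (x + L w) ∂μ := rfl

lemma iteratedFDeriv_schwartzAverage_sub [CompleteSpace F] (K : 𝓢(D, ℝ)) (L : D →L[ℝ] E)
    (η : 𝓢(E, F)) (n : ℕ) (x : E) :
    iteratedFDeriv ℝ n (⇑(schwartzAverage μ K L η - (∫ w, K w ∂μ) • η)) x =
      ∫ w, K w • (iteratedFDeriv ℝ n η (x + L w) - iteratedFDeriv ℝ n η x) ∂μ := by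
  have hsub : iteratedFDeriv ℝ n (⇑(schwartzAverage μ K L η - (∫ w, K w ∂μ) • η)) x =
      iteratedFDeriv ℝ n (schwartzAverage μ K L η) x -
        (∫ w, K w ∂μ) • iteratedFDeriv ℝ n η x := by
    rw [← iteratedFDeriv_const_smul_apply (η.smooth n).contDiffAt]
    exact iteratedFDeriv_sub_apply ((schwartzAverage μ K L η).smooth n).contDiffAt
      (((∫ w, K w ∂μ) • η).smooth n).contDiffAt
  have haverage : iteratedFDeriv ℝ n (schwartzAverage μ K L η) x =
      ∫ w, K w • iteratedFDeriv ℝ n η (x + L w) ∂μ :=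
    congrFun (iteratedFDeriv_integral_smul_comp_add K.integrable L η n) x
  simp_rw [hsub, haverage, smul_sub]
  rw [integral_sub (integrable_smul_iteratedFDeriv K.integrable L η n x)
    (K.integrable.smul_const _), integral_smul_const]

lemma exists_seminorm_schwartzAverage_sub_le [CompleteSpace F] (K : 𝓢(D, ℝ)) (η : 𝓢(E, F))
    (k n : ℕ) :
    ∃ C, ∀ L : D →L[ℝ] E, ‖L‖ ≤ 1 →
      SchwartzMap.seminorm ℝ k n (schwartzAverage μ K L η - (∫ w, K w ∂μ) • η) ≤ C * ‖L‖ := by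
  obtain ⟨S, hS0, hS⟩ := exists_pow_mul_norm_iteratedFDeriv_sub_le η k n
  refine ⟨S * ∫ w, (1 + ‖w‖) ^ (k + 1) * ‖K w‖ ∂μ, fun L hL =>
    SchwartzMap.seminorm_le_bound ℝ k n _ (mul_nonneg (mul_nonneg hS0 (integral_nonneg fun w =>
      by positivity)) (norm_nonneg L)) fun x => ?_⟩
  rw [iteratedFDeriv_schwartzAverage_sub, mul_right_comm]
  refine mul_norm_integral_smul_le K (by positivity) fun w => (hS x (L w)).trans ?_
  have hLw : ‖L w‖ ≤ ‖L‖ * ‖w‖ := L.le_opNorm w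
  calc S * (1 + ‖L w‖) ^ k * ‖L w‖
      ≤ S * (1 + ‖w‖) ^ k * (‖L‖ * (1 + ‖w‖)) := by
        gcongr
        · exact hLw.trans (mul_le_of_le_one_left (norm_nonneg _) hL)
        · exact hLw.trans (by gcongr; linarith)
    _ = S * ‖L‖ * (1 + ‖w‖) ^ (k + 1) := by ring

lemma tendsto_schwartzAverage [CompleteSpace F] {ι : Type*} {l : Filter ι} (K : 𝓢(D, ℝ))
    (η : 𝓢(E, F)) {L : ι → D →L[ℝ] E} (hL : Tendsto L l (𝓝 0)) :
    Tendsto (fun N => schwartzAverage μ K (L N) η) l (𝓝 ((∫ w, K w ∂μ) • η)) := by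
  rw [(schwartz_withSeminorms ℝ E F).tendsto_nhds]
  rintro ⟨k, n⟩ ε hε
  obtain ⟨C, hC⟩ := exists_seminorm_schwartzAverage_sub_le (μ := μ) K η k n
  have hnorm : Tendsto (fun N => ‖L N‖) l (𝓝 0) := tendsto_zero_iff_norm_tendsto_zero.1 hL
  have hlim : Tendsto (fun N => C * ‖L N‖) l (𝓝 0) := by simpa using hnorm.const_mul C
  filter_upwards [hnorm.eventually_le_const one_pos, hlim.eventually_lt_const hε] with N hN hNε
  exact (hC (L N) hN).trans_lt hNε

end Average

/-! ### Convolution of Schwartz functions -/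

section Convolution

open ContinuousLinearMap (mul)
open scoped Convolution

variable {E : Type*} [NormedAddCommGroup E] [NormedSpace ℝ E] [FiniteDimensional ℝ E]
  [MeasureSpace E] [BorelSpace E] [(volume : Measure E).IsAddHaarMeasure]

/-- The convolution `f ⋆ g` of two Schwartz functions, as a Schwartz function: it is the average
of the translates `g (· - w)` with weight `f w`. -/
def schwartzConv (f g : 𝓢(E, ℝ)) : 𝓢(E, ℝ) :=
  schwartzAverage volume f (-ContinuousLinearMap.id ℝ E) g

lemma coe_schwartzConv (f g : 𝓢(E, ℝ)) : ⇑(schwartzConv f g) = f ⋆[mul ℝ ℝ] g := by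
  ext x
  simp [schwartzConv, schwartzAverage_apply, convolution_def, sub_eq_add_neg]

lemma schwartzConv_apply_swap (f g : 𝓢(E, ℝ)) (x : E) :
    schwartzConv f g x = ∫ y, f (x - y) * g y := by
  rw [coe_schwartzConv, convolution_mul_swap]

lemma convolutionExists_schwartzMap (f g : 𝓢(E, ℝ)) :
    ConvolutionExists f g (mul ℝ ℝ) volume := fun x => by
  obtain ⟨C, hC⟩ := exists_norm_iteratedFDeriv_le g 0
  simpa [ConvolutionExistsAt, sub_eq_add_neg] using integrable_smul_comp_add
    (f.integrable (μ := volume)) (-ContinuousLinearMap.id ℝ E) g.continuous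
    (by simpa using hC) x

lemma schwartzConv_comm (f g : 𝓢(E, ℝ)) : schwartzConv f g = schwartzConv g f := by
  ext x
  rw [schwartzConv_apply_swap, coe_schwartzConv]
  simp [convolution_def, mul_comm]

lemma schwartzConv_add_left (f f' g : 𝓢(E, ℝ)) :
    schwartzConv (f + f') g = schwartzConv f g + schwartzConv f' g :=
  DFunLike.coe_injective <| by
    simpa [coe_schwartzConv] using
      (convolutionExists_schwartzMap f g).add_distrib (convolutionExists_schwartzMap f' g)

lemma schwartzConv_smul_left (c : ℝ) (f g : 𝓢(E, ℝ)) :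
    schwartzConv (c • f) g = c • schwartzConv f g :=
  DFunLike.coe_injective <| by simpa [coe_schwartzConv] using smul_convolution

lemma schwartzConv_sub_left (f f' g : 𝓢(E, ℝ)) :
    schwartzConv (f - f') g = schwartzConv f g - schwartzConv f' g := by
  rw [eq_sub_iff_add_eq, ← schwartzConv_add_left, sub_add_cancel]

lemma schwartzConv_sub_right (f g g' : 𝓢(E, ℝ)) :
    schwartzConv f (g - g') = schwartzConv f g - schwartzConv f g' := by
  rw [schwartzConv_comm, schwartzConv_sub_left, schwartzConv_comm g, schwartzConv_comm g']

lemma schwartzConv_assoc (f g h : 𝓢(E, ℝ)) :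
    schwartzConv (schwartzConv f g) h = schwartzConv f (schwartzConv g h) := by
  ext x
  obtain ⟨C, hC⟩ := exists_norm_iteratedFDeriv_le h 0
  have hint : Integrable (Function.uncurry fun y z => f z * (g (y - z) * h (x - y)))
      (volume.prod volume) := by
    have hfg := (f.integrable (μ := volume)).convolution_integrand (mul ℝ ℝ)
      (g.integrable (μ := volume))
    refine (hfg.mul_bdd (g := fun p : E × E => h (x - p.1)) (c := C) ?_ ?_).congr
      (ae_of_all _ fun p => by simp [Function.uncurry_def, mul_assoc])
    · have := h.continuous
      exact Continuous.aestronglyMeasurable (by fun_prop)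
    · exact ae_of_all _ fun p => by simpa using hC (x - p.1)
  simp only [coe_schwartzConv]
  exact convolution_assoc' _ _ _ _ mul_assoc
    (ae_of_all _ (convolutionExists_schwartzMap f g))
    (ae_of_all _ (convolutionExists_schwartzMap g h)) hint

end Convolution

/-! ### Dilations -/

section Dilation

variable {E : Type*} [NormedAddCommGroup E] [NormedSpace ℝ E]

/-- The `L¹`-normalised dilation `x ↦ |det T| f (T x)` of a Schwartz function. -/
def schwartzDilation (T : E ≃L[ℝ] E) : 𝓢(E, ℝ) →L[ℝ] 𝓢(E, ℝ) :=
  |(T : E →ₗ[ℝ] E).det| • SchwartzMap.compCLMOfContinuousLinearEquiv ℝ T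

lemma schwartzDilation_apply (T : E ≃L[ℝ] E) (f : 𝓢(E, ℝ)) (x : E) :
    schwartzDilation T f x = |(T : E →ₗ[ℝ] E).det| * f (T x) := rfl

lemma schwartzDilation_schwartzDilation (S T : E ≃L[ℝ] E) (f : 𝓢(E, ℝ)) :
    schwartzDilation S (schwartzDilation T f) = schwartzDilation (T * S) f := by
  ext x
  have hdet : ((T * S : E ≃L[ℝ] E) : E →ₗ[ℝ] E).det =
      (T : E →ₗ[ℝ] E).det * (S : E →ₗ[ℝ] E).det := LinearMap.det_comp _ _
  rw [schwartzDilation_apply, schwartzDilation_apply, schwartzDilation_apply, hdet, abs_mul]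
  change _ * (_ * f (T (S x))) = _ * f (T (S x))
  ring

lemma schwartzDilation_one (f : 𝓢(E, ℝ)) : schwartzDilation 1 f = f := by
  ext x
  have hdet : ((1 : E ≃L[ℝ] E) : E →ₗ[ℝ] E).det = 1 := LinearMap.det_id
  rw [schwartzDilation_apply, hdet, abs_one, one_mul]
  rfl

section Integral

variable [FiniteDimensional ℝ E] [MeasureSpace E] [BorelSpace E]
  [(volume : Measure E).IsAddHaarMeasure]

lemma abs_det_smul_integral_comp {F : Type*} [NormedAddCommGroup F] [NormedSpace ℝ F]
    (T : E ≃L[ℝ] E) (h : E → F) :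
    |(T : E →ₗ[ℝ] E).det| • ∫ x, h (T x) = ∫ x, h x := by
  have hdet : (T : E →ₗ[ℝ] E).det ≠ 0 := (LinearEquiv.isUnit_det' T.toLinearEquiv).ne_zero
  have hmap := Measure.map_linearMap_addHaar_eq_smul_addHaar (volume : Measure E) hdet
  have hcomp : ∫ x, h (T x) = ∫ x, h x ∂(volume.map T.toHomeomorph.toMeasurableEquiv) :=
    (integral_map_equiv T.toHomeomorph.toMeasurableEquiv h).symm
  rw [hcomp, show Measure.map T.toHomeomorph.toMeasurableEquiv volume = _ from hmap,
    integral_smul_measure, ENNReal.toReal_ofReal (abs_nonneg _), abs_inv,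
    smul_inv_smul₀ (abs_ne_zero.2 hdet)]

lemma integral_mul_schwartzDilation (T : E ≃L[ℝ] E) (f : 𝓢(E, ℝ)) (h : E → ℝ) :
    ∫ x, h x * schwartzDilation T f x = ∫ x, h (T.symm x) * f x := by
  rw [← abs_det_smul_integral_comp T fun x => h (T.symm x) * f x, smul_eq_mul,
    ← integral_const_mul]
  refine integral_congr_ae (ae_of_all _ fun x => ?_)
  simp only [schwartzDilation_apply, T.symm_apply_apply, mul_left_comm]

lemma schwartzDilation_schwartzConv (T : E ≃L[ℝ] E) (f g : 𝓢(E, ℝ)) :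
    schwartzDilation T (schwartzConv f g) =
      schwartzConv (schwartzDilation T f) (schwartzDilation T g) := by
  ext x
  rw [schwartzConv_apply_swap,
    integral_mul_schwartzDilation T g fun y => schwartzDilation T f (x - y),
    schwartzDilation_apply, schwartzConv_apply_swap, ← integral_const_mul]
  refine integral_congr_ae (ae_of_all _ fun y => ?_)
  simp only [schwartzDilation_apply, map_sub, T.apply_symm_apply, mul_assoc]

lemma schwartzAverage_schwartzDilation {F G : Type*} [NormedAddCommGroup F] [NormedSpace ℝ F]
    [NormedAddCommGroup G] [NormedSpace ℝ G] (T : E ≃L[ℝ] E) (K : 𝓢(E, ℝ)) (L : E →L[ℝ] F)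
    (η : 𝓢(F, G)) :
    schwartzAverage volume (schwartzDilation T K) L η =
      schwartzAverage volume K (L.comp (T.symm : E →L[ℝ] E)) η := by
  ext x
  simp_rw [schwartzAverage_apply]
  rw [← abs_det_smul_integral_comp T fun w => K w • η (x + L.comp (T.symm : E →L[ℝ] E) w),
    ← integral_smul]
  simp [schwartzDilation_apply, mul_smul]

end Integral

end Dilation

/-! ### The reproducing formula -/

section Reproducing

variable {E : Type*} [NormedAddCommGroup E] [NormedSpace ℝ E]

/-- The sequence `θ₀, θ_1, θ_2, …` of successive dilations: the first term is `θ₀`, and `θ_j` is the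
`L¹`-normalised dilation of `θ` by `T ^ j` for `j ≥ 1`. -/
def dilationSeq (T : E ≃L[ℝ] E) (θ₀ θ : 𝓢(E, ℝ)) : ℕ → 𝓢(E, ℝ)
  | 0 => θ₀
  | j + 1 => schwartzDilation (T ^ (j + 1)) θ

lemma sum_dilationSeq (T : E ≃L[ℝ] E) (K : 𝓢(E, ℝ)) (N : ℕ) :
    ∑ j ∈ Finset.range (N + 1), dilationSeq T K (K - schwartzDilation T⁻¹ K) j =
      schwartzDilation (T ^ N) K := by
  induction N with
  | zero => simp [dilationSeq, schwartzDilation_one]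
  | succ N ih =>
    rw [Finset.sum_range_succ, ih, dilationSeq, map_sub, schwartzDilation_schwartzDilation,
      pow_succ', inv_mul_cancel_left, add_sub_cancel]

lemma tendsto_coe_symm_pow_atTop_nhds_zero {T : E ≃L[ℝ] E} (hT : ‖(T.symm : E →L[ℝ] E)‖ < 1) :
    Tendsto (fun N : ℕ => ((T ^ N).symm : E →L[ℝ] E)) atTop (𝓝 0) := by
  have hpow (N : ℕ) : ((T ^ N).symm : E →L[ℝ] E) = (T.symm : E →L[ℝ] E) ^ N := by
    induction N with
    | zero => rfl
    | succ N ih =>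
      rw [pow_succ', pow_succ, ← ih]
      rfl
  simpa only [hpow] using tendsto_pow_atTop_nhds_zero_of_norm_lt_one hT

variable [FiniteDimensional ℝ E] [MeasureSpace E] [BorelSpace E]
  [(volume : Measure E).IsAddHaarMeasure]

lemma schwartzConv_dilationSeq (T : E ≃L[ℝ] E) (φ₀ φ ψ₀ ψ : 𝓢(E, ℝ)) (j : ℕ) :
    schwartzConv (dilationSeq T ψ₀ ψ j) (dilationSeq T φ₀ φ j) =
      dilationSeq T (schwartzConv ψ₀ φ₀) (schwartzConv ψ φ) j := by
  cases j with
  | zero => rfl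
  | succ j => exact (schwartzDilation_schwartzConv _ ψ φ).symm

lemma schwartzAverage_sum {ι : Type*} (s : Finset ι) (K : ι → 𝓢(E, ℝ)) (η : 𝓢(E, ℝ)) :
    schwartzAverage volume (∑ j ∈ s, K j) (.id ℝ E) η =
      ∑ j ∈ s, schwartzAverage volume (K j) (.id ℝ E) η := by
  ext x
  obtain ⟨C, hC⟩ := exists_norm_iteratedFDeriv_le η 0
  simp only [sum_apply, schwartzAverage_apply, Finset.sum_smul]
  exact integral_finsetSum s fun j _ => integrable_smul_comp_add (K j).integrable _ η.continuous
    (by simpa using hC) x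

lemma schwartzAverage_id_eq_of_forall_eq_integral {k η c : 𝓢(E, ℝ)}
    (hc : ∀ x, c x = ∫ y, k (y - x) * η y) : c = schwartzAverage volume k (.id ℝ E) η := by
  ext x
  rw [hc, schwartzAverage_apply, ← integral_add_right_eq_self _ x]
  simp [add_comm]

/-- The formula `u = ∑ j, k j * u` holds weak* for every tempered distribution `u`. Tested against
`η`, the distribution `k j * u` is `u (c j)` with `c j` the convolution of `η` with the reflected
kernel `x ↦ k j (-x)`; the kernels need not be given as Schwartz functions. -/
def IsReproducing (k : ℕ → E → ℝ) : Prop :=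
  ∀ (u : 𝓢(E, ℝ) →L[ℝ] ℝ) (η : 𝓢(E, ℝ)) (c : ℕ → 𝓢(E, ℝ)),
    (∀ j x, c j x = ∫ y, k j (y - x) * η y) →
      Tendsto (fun N => ∑ j ∈ Finset.range N, u (c j)) atTop (𝓝 (u η))

lemma isReproducing_dilationSeq {T : E ≃L[ℝ] E} (hT : ‖(T.symm : E →L[ℝ] E)‖ < 1)
    {K : 𝓢(E, ℝ)} (hK : ∫ x, K x = 1) :
    IsReproducing fun j => dilationSeq T K (K - schwartzDilation T⁻¹ K) j := fun u η c hc => by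
  have hsum (N : ℕ) : ∑ j ∈ Finset.range (N + 1), c j =
      schwartzAverage volume K ((T ^ N).symm : E →L[ℝ] E) η := by
    simp_rw [fun j => schwartzAverage_id_eq_of_forall_eq_integral (hc j)]
    rw [← schwartzAverage_sum, sum_dilationSeq, schwartzAverage_schwartzDilation,
      ContinuousLinearMap.id_comp]
  have hlim := tendsto_schwartzAverage (μ := volume) K η (tendsto_coe_symm_pow_atTop_nhds_zero hT)
  rw [hK, one_smul] at hlim
  rw [← tendsto_add_atTop_iff_nat 1]
  simpa only [← map_sum, hsum, Function.comp_def] using (u.continuous.tendsto η).comp hlim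

/-- The dual kernel `ψ₀ = 3A - 2 A ⋆ A`, so that `ψ₀ ⋆ A = p(A)` for the polynomial
`p(x) = 3x² - 2x³` in the convolution algebra. Since `p(1) = 1`, both `A` and `p(A)` have the
moments of the Dirac mass when `A` has. -/
def initialDualKernel (A : 𝓢(E, ℝ)) : 𝓢(E, ℝ) :=
  (3 : ℝ) • A - (2 : ℝ) • schwartzConv A A

/-- The dual kernel `ψ = (p(A) - p(B)) / (A - B)` in the convolution algebra, for the polynomial
`p(x) = 3x² - 2x³`. Since `p'(1) = 0`, its moments vanish when `A` and `B` have the moments of the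
Dirac mass. -/
def dualKernel (A B : 𝓢(E, ℝ)) : 𝓢(E, ℝ) :=
  (3 : ℝ) • (A + B) - (2 : ℝ) • (schwartzConv A A + schwartzConv A B + schwartzConv B B)

lemma schwartzConv_dualKernel_sub (A B : 𝓢(E, ℝ)) :
    schwartzConv (dualKernel A B) (A - B) =
      schwartzConv (initialDualKernel A) A - schwartzConv (initialDualKernel B) B := by
  have hABA : schwartzConv (schwartzConv A B) A = schwartzConv (schwartzConv A A) B := by
    rw [schwartzConv_assoc, schwartzConv_comm B, schwartzConv_assoc]
  have hBBA : schwartzConv (schwartzConv B B) A = schwartzConv (schwartzConv A B) B := by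
    rw [schwartzConv_comm, schwartzConv_assoc]
  simp only [dualKernel, initialDualKernel, schwartzConv_sub_left, schwartzConv_sub_right,
    schwartzConv_add_left, schwartzConv_smul_left, schwartzConv_comm B A, hABA, hBBA]
  module

lemma schwartzDilation_schwartzConv_initialDualKernel (T : E ≃L[ℝ] E) (A : 𝓢(E, ℝ)) :
    schwartzDilation T (schwartzConv (initialDualKernel A) A) =
      schwartzConv (initialDualKernel (schwartzDilation T A)) (schwartzDilation T A) := by
  simp only [initialDualKernel, schwartzDilation_schwartzConv, map_sub, map_smul]

lemma isReproducing_dualKernel {T : E ≃L[ℝ] E} (hT : ‖(T.symm : E →L[ℝ] E)‖ < 1) {A : 𝓢(E, ℝ)}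
    (hA : ∫ x, schwartzConv (initialDualKernel A) A x = 1) :
    IsReproducing fun j => dilationSeq T (schwartzConv (initialDualKernel A) A)
      (schwartzConv (dualKernel A (schwartzDilation T⁻¹ A)) (A - schwartzDilation T⁻¹ A)) j := by
  rw [schwartzConv_dualKernel_sub, ← schwartzDilation_schwartzConv_initialDualKernel]
  exact isReproducing_dilationSeq hT hA

end Reproducing

/-! ### Moments -/

section Moments

open MvPolynomial (eval)

variable {ι : Type*} [Fintype ι]

lemma exists_norm_eval_le_mul_one_add_norm_pow (P : MvPolynomial ι ℝ) :
    ∃ C, 0 ≤ C ∧ ∃ d : ℕ, ∀ x : ι → ℝ, ‖eval x P‖ ≤ C * (1 + ‖x‖) ^ d := by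
  induction P using MvPolynomial.induction_on with
  | C r => exact ⟨‖r‖, norm_nonneg _, 0, fun x => by simp⟩
  | add p q hp hq =>
    obtain ⟨C, hC0, d, hC⟩ := hp
    obtain ⟨C', hC0', d', hC'⟩ := hq
    refine ⟨C + C', add_nonneg hC0 hC0', max d d', fun x => ?_⟩
    have hone : 1 ≤ 1 + ‖x‖ := by simp
    rw [map_add, add_mul]
    refine (norm_add_le _ _).trans (add_le_add ((hC x).trans ?_) ((hC' x).trans ?_))
    · gcongr
      exact le_max_left _ _
    · gcongr
      exact le_max_right _ _
  | mul_X p i hp =>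
    obtain ⟨C, hC0, d, hC⟩ := hp
    refine ⟨C, hC0, d + 1, fun x => ?_⟩
    rw [map_mul, MvPolynomial.eval_X, norm_mul, pow_succ, ← mul_assoc]
    gcongr
    · exact hC x
    · exact (norm_le_pi_norm x i).trans (by simp)

lemma integrable_eval_mul_schwartzMap (f : 𝓢(ι → ℝ, ℝ)) (P : MvPolynomial ι ℝ) :
    Integrable fun x => eval x P * f x := by
  obtain ⟨C, -, d, hC⟩ := exists_norm_eval_le_mul_one_add_norm_pow P
  have hcont : Continuous fun x => eval x P * f x :=
    (MvPolynomial.continuous_eval P).mul f.continuous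
  refine ((integrable_one_add_pow_mul (μ := volume) f d).const_mul C).mono'
    hcont.aestronglyMeasurable (ae_of_all _ fun x => ?_)
  rw [norm_mul, ← mul_assoc]
  gcongr
  exact hC x

lemma integrable_eval_mul_convolution_integrand (f g : 𝓢(ι → ℝ, ℝ)) (P : MvPolynomial ι ℝ) :
    Integrable (Function.uncurry fun x y => eval x P * (f (x - y) * g y))
      (volume.prod volume) := by
  obtain ⟨C, hC0, k, hC⟩ := exists_norm_eval_le_mul_one_add_norm_pow P
  have hmajorant := ((integrable_one_add_pow_mul (μ := volume) g k).convolution_integrand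
    (ContinuousLinearMap.mul ℝ ℝ) (integrable_one_add_pow_mul (μ := volume) f k)).const_mul C
  have hcont : Continuous (Function.uncurry fun x y : ι → ℝ => eval x P * (f (x - y) * g y)) :=
    ((MvPolynomial.continuous_eval P).comp continuous_fst).mul
      ((f.continuous.comp (continuous_fst.sub continuous_snd)).mul
        (g.continuous.comp continuous_snd))
  refine hmajorant.mono' hcont.aestronglyMeasurable (ae_of_all _ ?_)
  rintro ⟨x, y⟩
  simp only [Function.uncurry_apply_pair, norm_mul, ContinuousLinearMap.mul_apply']
  have hx : 1 + ‖x‖ ≤ (1 + ‖x - y‖) * (1 + ‖y‖) := by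
    have htri : ‖x‖ ≤ ‖x - y‖ + ‖y‖ := by simpa using norm_add_le (x - y) y
    nlinarith [mul_nonneg (norm_nonneg (x - y)) (norm_nonneg y)]
  calc ‖eval x P‖ * (‖f (x - y)‖ * ‖g y‖)
      ≤ (C * ((1 + ‖x - y‖) * (1 + ‖y‖)) ^ k) * (‖f (x - y)‖ * ‖g y‖) := by
        gcongr
        exact (hC x).trans (by gcongr)
    _ = C * ((1 + ‖y‖) ^ k * ‖g y‖ * ((1 + ‖x - y‖) ^ k * ‖f (x - y)‖)) := by
        rw [mul_pow]; ring

lemma exists_eval_eq_eval_linearMap_add {R σ τ : Type*} [CommSemiring R] [Finite τ]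
    (L : (τ → R) →ₗ[R] σ → R) (y : σ → R) (P : MvPolynomial σ R) :
    ∃ Q : MvPolynomial τ R, ∀ x, eval x Q = eval (L x + y) P := by
  classical
  cases nonempty_fintype τ
  refine ⟨MvPolynomial.bind₁ (fun i => ∑ j, .X j * .C (L (fun k => if j = k then 1 else 0) i) +
    .C (y i)) P, fun x => ?_⟩
  refine (MvPolynomial.eval₂Hom_bind₁ (RingHom.id R) x _ P).trans ?_
  congr 2
  ext i
  simp [L.pi_apply_eq_sum_univ x]

/-- `f` has the moments of `c` times the Dirac mass at the origin. -/
def HasDiracMoments (f : 𝓢(ι → ℝ, ℝ)) (c : ℝ) : Prop :=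
  ∀ P : MvPolynomial ι ℝ, ∫ x, eval x P * f x = c * eval 0 P

namespace HasDiracMoments

variable {f g : 𝓢(ι → ℝ, ℝ)} {c d : ℝ}

lemma add (hf : HasDiracMoments f c) (hg : HasDiracMoments g d) :
    HasDiracMoments (f + g) (c + d) := fun P => by
  simp only [add_apply, mul_add]
  rw [integral_add (integrable_eval_mul_schwartzMap f P) (integrable_eval_mul_schwartzMap g P),
    hf P, hg P, add_mul]

lemma smul (hf : HasDiracMoments f c) (r : ℝ) : HasDiracMoments (r • f) (r * c) := fun P => by
  simp only [smul_apply, smul_eq_mul, mul_left_comm _ r]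
  rw [integral_const_mul, hf P, mul_assoc]

lemma sub (hf : HasDiracMoments f c) (hg : HasDiracMoments g d) :
    HasDiracMoments (f - g) (c - d) := by
  simpa [sub_eq_add_neg] using hf.add (hg.smul (-1))

protected lemma schwartzDilation (hf : HasDiracMoments f c) (T : (ι → ℝ) ≃L[ℝ] ι → ℝ) :
    HasDiracMoments (schwartzDilation T f) c := fun P => by
  obtain ⟨Q, hQ⟩ := exists_eval_eq_eval_linearMap_add T.symm.toLinearMap 0 P
  have hQ' (x : ι → ℝ) : eval x Q = eval (T.symm x) P := by simpa using hQ x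
  rw [integral_mul_schwartzDilation T f fun x => eval x P]
  simp_rw [← hQ']
  rw [hf, hQ', map_zero]

protected lemma schwartzConv (hf : HasDiracMoments f c) (hg : HasDiracMoments g d) :
    HasDiracMoments (schwartzConv f g) (c * d) := fun P => by
  have htranslate (y : ι → ℝ) : ∫ x, eval x P * (f (x - y) * g y) = c * (eval y P * g y) := by
    obtain ⟨Q, hQ⟩ := exists_eval_eq_eval_linearMap_add (.id : (ι → ℝ) →ₗ[ℝ] ι → ℝ) y P
    simp only [LinearMap.id_apply] at hQ
    rw [← integral_add_right_eq_self _ y]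
    simp only [add_sub_cancel_right, ← hQ, ← mul_assoc, integral_mul_const]
    rw [hf, hQ, zero_add]
  calc ∫ x, eval x P * schwartzConv f g x
      = ∫ x, ∫ y, eval x P * (f (x - y) * g y) := by
        simp only [schwartzConv_apply_swap, integral_const_mul]
    _ = ∫ y, ∫ x, eval x P * (f (x - y) * g y) :=
        integral_integral_swap (integrable_eval_mul_convolution_integrand f g P)
    _ = c * d * eval 0 P := by
        simp_rw [htranslate]
        rw [integral_const_mul, hg P, mul_assoc]

lemma integral_eq (hf : HasDiracMoments f c) : ∫ x, f x = c := by
  simpa using hf 1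

lemma vanishingMoments {m : ℕ} {f : 𝓢(Fin m → ℝ, ℝ)} (hf : HasDiracMoments f 0) :
    VanishingMoments f := fun α => by
  simpa [map_prod] using hf (∏ i, MvPolynomial.X i ^ α i)

protected lemma initialDualKernel (hf : HasDiracMoments f 1) :
    HasDiracMoments (initialDualKernel f) 1 := by
  rw [initialDualKernel]
  convert (hf.smul 3).sub ((hf.schwartzConv hf).smul 2) using 1
  norm_num

lemma schwartzConv_initialDualKernel (hf : HasDiracMoments f 1) :
    HasDiracMoments (schwartzConv (initialDualKernel f) f) 1 := by
  simpa using hf.initialDualKernel.schwartzConv hf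

protected lemma dualKernel (hf : HasDiracMoments f 1) (hg : HasDiracMoments g 1) :
    HasDiracMoments (dualKernel f g) 0 := by
  rw [dualKernel]
  convert ((hf.add hg).smul 3).sub
    ((((hf.schwartzConv hf).add (hf.schwartzConv hg)).add (hg.schwartzConv hg)).smul 2) using 1
  norm_num

protected lemma schwartzTensorPower {g : 𝓢(ℝ, ℝ)}
    (hg : ∀ k : ℕ, ∫ x, x ^ k * g x = if k = 0 then 1 else 0) :
    HasDiracMoments (schwartzTensorPower ι g) 1 := fun P => by
  induction P using MvPolynomial.induction_on' with
  | monomial s r =>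
    have hprod (x : ι → ℝ) : eval x (MvPolynomial.monomial s r) *
        schwartzTensorPower ι g x = r * ∏ i, (x i ^ s i * g (x i)) := by
      rw [MvPolynomial.eval_monomial, Finsupp.prod_fintype _ _ (by simp),
        Finset.prod_mul_distrib, mul_assoc, schwartzTensorPower_apply]
    simp_rw [hprod]
    rw [integral_const_mul, integral_fintype_prod_volume_eq_prod fun i (y : ℝ) => y ^ s i * g y,
      MvPolynomial.eval_monomial, Finsupp.prod_fintype _ _ (by simp), one_mul]
    simp only [hg, Pi.zero_apply, zero_pow_eq]
  | add p q hp hq =>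
    simp only [map_add, add_mul, mul_add]
    rw [integral_add (integrable_eval_mul_schwartzMap _ p) (integrable_eval_mul_schwartzMap _ q),
      hp, hq]

end HasDiracMoments

end Moments

/-! ### Diagonal dilations and supports -/

section DiagScale

variable {ι : Type*} (a : ι → ℝ)

/-- The anisotropic scaling `x ↦ (2 ^ a i * x i)ᵢ`, denoted `x ↦ 2 ^ a x` in the literature. -/
def diagScale : (ι → ℝ) ≃L[ℝ] (ι → ℝ) :=
  ContinuousLinearEquiv.piCongrRight fun i => ContinuousLinearEquiv.unitsEquivAut ℝ
    (Units.mk0 ((2 : ℝ) ^ a i) (Real.rpow_pos_of_pos two_pos _).ne')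

lemma diagScale_apply (x : ι → ℝ) (i : ι) : diagScale a x i = 2 ^ a i * x i :=
  mul_comm _ _

lemma diagScale_symm : (diagScale a).symm = diagScale (-a) := by
  ext x i
  refine (mul_comm _ _).trans ?_
  rw [diagScale_apply, Pi.neg_apply, Real.rpow_neg two_pos.le]
  rfl

lemma diagScale_add (b : ι → ℝ) : diagScale (a + b) = diagScale a * diagScale b := by
  ext x i
  change _ = diagScale a (diagScale b x) i
  simp only [diagScale_apply, Pi.add_apply, Real.rpow_add two_pos, mul_assoc]

lemma diagScale_pow (j : ℕ) : diagScale a ^ j = diagScale ((j : ℝ) • a) := by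
  induction j with
  | zero =>
    ext x i
    simp only [diagScale_apply, Nat.cast_zero, zero_smul, Pi.zero_apply, Real.rpow_zero, one_mul]
    rfl
  | succ j ih => rw [pow_succ, ih, ← diagScale_add, Nat.cast_succ, add_smul, one_smul]

variable [Fintype ι]

lemma det_diagScale : ((diagScale a : (ι → ℝ) ≃L[ℝ] ι → ℝ) : (ι → ℝ) →ₗ[ℝ] ι → ℝ).det =
    2 ^ ∑ i, a i := by
  have hdiag : ((diagScale a : (ι → ℝ) ≃L[ℝ] ι → ℝ) : (ι → ℝ) →ₗ[ℝ] ι → ℝ) = LinearMap.pi fun i =>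
      ((2 : ℝ) ^ a i • LinearMap.id).comp (LinearMap.proj i) := by
    ext x i
    simp [diagScale_apply]
  rw [hdiag, LinearMap.det_pi, Real.rpow_sum_of_pos two_pos]
  simp

variable {a} in
lemma norm_diagScale_symm_lt_one (ha : ∀ i, 0 < a i) :
    ‖((diagScale a).symm : (ι → ℝ) →L[ℝ] ι → ℝ)‖ < 1 := by
  rw [diagScale_symm]
  refine (ContinuousLinearMap.opNorm_le_bound _ (norm_nonneg fun i => (2 : ℝ) ^ (-a i))
    fun x => ?_).trans_lt ((pi_norm_lt_iff one_pos).2 fun i => ?_)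
  · refine (pi_norm_le_iff_of_nonneg (by positivity)).2 fun i => ?_
    rw [ContinuousLinearEquiv.coe_coe, diagScale_apply, norm_mul]
    exact mul_le_mul (norm_le_pi_norm (fun i => (2 : ℝ) ^ (-a i)) i) (norm_le_pi_norm x i)
      (norm_nonneg _) (norm_nonneg _)
  · rw [Real.norm_of_nonneg (by positivity)]
    exact Real.rpow_lt_one_of_one_lt_of_neg one_lt_two (neg_neg_iff_pos.2 (ha i))

lemma anisoDil_eq_dilationSeq {m : ℕ} (a : Fin m → ℝ) (θ₀ θ : 𝓢(Fin m → ℝ, ℝ)) :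
    anisoDil a θ₀ θ = fun j => ⇑(dilationSeq (diagScale a) θ₀ θ j) := by
  funext j x
  cases j with
  | zero => rfl
  | succ j =>
    rw [anisoDil, if_neg j.succ_ne_zero, dilationSeq, schwartzDilation_apply, diagScale_pow,
      det_diagScale, abs_of_pos (by positivity)]
    simp only [Pi.smul_apply, smul_eq_mul, Finset.mul_sum]
    congr 2
    ext i
    simp [diagScale_apply]

end DiagScale

section Support

open Function (support)

variable {E : Type*} [NormedAddCommGroup E] [NormedSpace ℝ E] {S : AddSubmonoid E}

lemma support_schwartzDilation_subset {T : E ≃L[ℝ] E} (hT : ∀ x ∈ S, T.symm x ∈ S)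
    {f : 𝓢(E, ℝ)} (hf : support f ⊆ S) : support (schwartzDilation T f) ⊆ S := fun x hx => by
  simpa using hT _ (hf (right_ne_zero_of_mul hx))

variable [FiniteDimensional ℝ E] [MeasureSpace E] [BorelSpace E]
  [(volume : Measure E).IsAddHaarMeasure] {f g : 𝓢(E, ℝ)}

lemma support_schwartzConv_subset (hf : support f ⊆ S) (hg : support g ⊆ S) :
    support (schwartzConv f g) ⊆ S := by
  rw [coe_schwartzConv]
  exact (support_convolution_subset _).trans (Set.add_subset_iff.2 fun x hx y hy =>
    S.add_mem (hf hx) (hg hy))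

lemma support_initialDualKernel_subset (hf : support f ⊆ S) :
    support (initialDualKernel f) ⊆ S := by
  refine (Function.support_sub _ _).trans (Set.union_subset ?_ ?_)
  · exact (Function.support_const_smul_subset _ _).trans hf
  · exact (Function.support_const_smul_subset _ _).trans (support_schwartzConv_subset hf hf)

lemma support_dualKernel_subset (hf : support f ⊆ S) (hg : support g ⊆ S) :
    support (dualKernel f g) ⊆ S := by
  refine (Function.support_sub _ _).trans (Set.union_subset ?_ ?_) <;>
    refine (Function.support_const_smul_subset _ _).trans ?_
  · exact (Function.support_add _ _).trans (Set.union_subset hf hg)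
  · refine (Function.support_add _ _).trans (Set.union_subset
      ((Function.support_add _ _).trans (Set.union_subset ?_ ?_)) ?_)
    exacts [support_schwartzConv_subset hf hf, support_schwartzConv_subset hf hg,
      support_schwartzConv_subset hg hg]

end Support

/-! ### The kernels -/

section Kernels

open Function (support)

lemma exists_support_subset_nonneg_hasDiracMoments_one (ι : Type*) [Fintype ι] :
    ∃ A : 𝓢(ι → ℝ, ℝ), support A ⊆ AddSubmonoid.nonneg (ι → ℝ) ∧ HasDiracMoments A 1 := by
  obtain ⟨g, hg0, hgmoment⟩ := exists_schwartzMap_halfLine_dirac_moments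
  refine ⟨schwartzTensorPower ι g, fun x hx i => ?_, .schwartzTensorPower hgmoment⟩
  by_contra! hi
  exact hx (Finset.prod_eq_zero (Finset.mem_univ i) (hg0 _ hi.le))

lemma diagScale_mem_nonneg {ι : Type*} (a : ι → ℝ) :
    ∀ x ∈ AddSubmonoid.nonneg (ι → ℝ), diagScale a x ∈ AddSubmonoid.nonneg (ι → ℝ) :=
  fun x hx i => by
    rw [diagScale_apply]
    exact mul_nonneg (by positivity) (hx i)

theorem exists_localized_means_kernels_general {m : ℕ} (a : Fin m → ℝ) (ha : ∀ i, 0 < a i) :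
    ∃ φ₀ φ ψ₀ ψ : 𝓢(Fin m → ℝ, ℝ),
      tsupport φ₀ ⊆ Set.Ici 0 ∧ tsupport φ ⊆ Set.Ici 0 ∧
      tsupport ψ₀ ⊆ Set.Ici 0 ∧ tsupport ψ ⊆ Set.Ici 0 ∧
      ∫ x, φ₀ x = 1 ∧ ∫ x, ψ₀ x = 1 ∧ VanishingMoments φ ∧ VanishingMoments ψ ∧
      IsReproducing (fun j x => ∫ z, anisoDil a ψ₀ ψ j (x - z) * anisoDil a φ₀ φ j z) ∧
      tsupport (schwartzConv ψ₀ φ₀) ⊆ Set.Ici 0 ∧ tsupport (schwartzConv ψ φ) ⊆ Set.Ici 0 ∧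
      ∫ x, schwartzConv ψ₀ φ₀ x = 1 ∧ VanishingMoments (schwartzConv ψ φ) ∧
      IsReproducing (anisoDil a (schwartzConv ψ₀ φ₀) (schwartzConv ψ φ)) := by
  obtain ⟨A, hA, hAmoment⟩ := exists_support_subset_nonneg_hasDiracMoments_one (Fin m)
  have hrepr := isReproducing_dualKernel (T := diagScale a) (A := A)
    (norm_diagScale_symm_lt_one ha) hAmoment.schwartzConv_initialDualKernel.integral_eq
  have hB := support_schwartzDilation_subset (T := (diagScale a)⁻¹) (diagScale_mem_nonneg a) hA
  have hBmoment := hAmoment.schwartzDilation (diagScale a)⁻¹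
  generalize schwartzDilation (diagScale a)⁻¹ A = B at hrepr hB hBmoment
  have hφ := (Function.support_sub A B).trans (Set.union_subset hA hB)
  have hφmoment : HasDiracMoments (A - B) 0 := by simpa using hAmoment.sub hBmoment
  have hψ₀ := support_initialDualKernel_subset hA
  have hψ := support_dualKernel_subset hA hB
  have hψmoment := hAmoment.dualKernel hBmoment
  have hkmoment : HasDiracMoments (schwartzConv (dualKernel A B) (A - B)) 0 := by
    simpa using hψmoment.schwartzConv hφmoment
  have hclosed {f : 𝓢(Fin m → ℝ, ℝ)} (hf : support f ⊆ AddSubmonoid.nonneg (Fin m → ℝ)) :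
      tsupport f ⊆ Set.Ici 0 := closure_minimal hf isClosed_Ici
  refine ⟨A, A - B, initialDualKernel A, dualKernel A B, hclosed hA, hclosed hφ, hclosed hψ₀,
    hclosed hψ, hAmoment.integral_eq, hAmoment.initialDualKernel.integral_eq,
    hφmoment.vanishingMoments, hψmoment.vanishingMoments, ?_,
    hclosed (support_schwartzConv_subset hψ₀ hA), hclosed (support_schwartzConv_subset hψ hφ),
    hAmoment.schwartzConv_initialDualKernel.integral_eq, hkmoment.vanishingMoments, ?_⟩
  · simpa only [anisoDil_eq_dilationSeq, ← schwartzConv_apply_swap, schwartzConv_dilationSeq]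
      using hrepr
  · simpa only [anisoDil_eq_dilationSeq] using hrepr

end Kernels

/-- For any anisotropy `a ∈ [1,∞)ⁿ` there exist
`φ₀, φ, ψ₀, ψ ∈ 𝓢(ℝⁿ)` supported in the closed half-space `{xₙ ≥ 0}`, with
`∫φ₀ = 1 = ∫ψ₀` and `φ, ψ` having vanishing moments of all orders, such that the Calderón
reproducing formula `u = Σ_j ψ_j * (φ_j * u)` holds weak* for every `u ∈ 𝓢'(ℝⁿ)`.
Consequently the kernels `k₀ = ψ₀*φ₀` and `k = ψ*φ` are Schwartz functions supported in
`{xₙ ≥ 0}`, `∫k₀ = 1`, `k` has vanishing moments of all orders, and `u = Σ_j k_j * u`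
in `𝓢'(ℝⁿ)` for every `u ∈ 𝓢'(ℝⁿ)`. -/
theorem exists_localized_means_kernels (n : ℕ) (a : Fin (n+1) → ℝ)
    (ha : ∀ i, 1 ≤ a i) :
    ∃ φ₀ φ ψ₀ ψ k₀ k : SchwartzMap (Fin (n+1) → ℝ) ℝ,
      tsupport ⇑φ₀ ⊆ {x : Fin (n+1) → ℝ | 0 ≤ x (Fin.last n)} ∧
      tsupport ⇑φ ⊆ {x : Fin (n+1) → ℝ | 0 ≤ x (Fin.last n)} ∧
      tsupport ⇑ψ₀ ⊆ {x : Fin (n+1) → ℝ | 0 ≤ x (Fin.last n)} ∧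
      tsupport ⇑ψ ⊆ {x : Fin (n+1) → ℝ | 0 ≤ x (Fin.last n)} ∧
      (∫ x : Fin (n+1) → ℝ, φ₀ x) = 1 ∧ (∫ x : Fin (n+1) → ℝ, ψ₀ x) = 1 ∧
      VanishingMoments ⇑φ ∧ VanishingMoments ⇑ψ ∧
      -- Calderón reproducing formula `u = Σ_j ψ_j * (φ_j * u)`, weak* in `𝓢'(ℝⁿ)`
      (∀ (u : SchwartzMap (Fin (n+1) → ℝ) ℝ →L[ℝ] ℝ)
        (η : SchwartzMap (Fin (n+1) → ℝ) ℝ)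
        (c : ℕ → SchwartzMap (Fin (n+1) → ℝ) ℝ),
        (∀ (j : ℕ) (x : Fin (n+1) → ℝ),
          c j x = ∫ y : Fin (n+1) → ℝ,
            (∫ z : Fin (n+1) → ℝ,
              anisoDil a ⇑ψ₀ ⇑ψ j ((y - x) - z) * anisoDil a ⇑φ₀ ⇑φ j z) * η y) →
        Tendsto (fun N => ∑ j ∈ Finset.range N, u (c j)) atTop (nhds (u η))) ∧
      -- the kernels `k₀ = ψ₀ * φ₀` and `k = ψ * φ`
      (∀ x : Fin (n+1) → ℝ, k₀ x = ∫ y : Fin (n+1) → ℝ, ψ₀ (x - y) * φ₀ y) ∧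
      (∀ x : Fin (n+1) → ℝ, k x = ∫ y : Fin (n+1) → ℝ, ψ (x - y) * φ y) ∧
      tsupport ⇑k₀ ⊆ {x : Fin (n+1) → ℝ | 0 ≤ x (Fin.last n)} ∧
      tsupport ⇑k ⊆ {x : Fin (n+1) → ℝ | 0 ≤ x (Fin.last n)} ∧
      (∫ x : Fin (n+1) → ℝ, k₀ x) = 1 ∧
      VanishingMoments ⇑k ∧
      -- reproducing formula `u = Σ_j k_j * u`, weak* in `𝓢'(ℝⁿ)`
      (∀ (u : SchwartzMap (Fin (n+1) → ℝ) ℝ →L[ℝ] ℝ)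
        (η : SchwartzMap (Fin (n+1) → ℝ) ℝ)
        (c : ℕ → SchwartzMap (Fin (n+1) → ℝ) ℝ),
        (∀ (j : ℕ) (x : Fin (n+1) → ℝ),
          c j x = ∫ y : Fin (n+1) → ℝ, anisoDil a ⇑k₀ ⇑k j (y - x) * η y) →
        Tendsto (fun N => ∑ j ∈ Finset.range N, u (c j)) atTop (nhds (u η))) := by
  obtain ⟨φ₀, φ, ψ₀, ψ, hφ₀, hφ, hψ₀, hψ, hφ₀int, hψ₀int, hφmoment, hψmoment, hCalderon,
    hk₀, hk, hk₀int, hkmoment, hrepr⟩ :=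
    exists_localized_means_kernels_general a fun i => one_pos.trans_le (ha i)
  have hhalf : Set.Ici 0 ⊆ {x : Fin (n + 1) → ℝ | 0 ≤ x (Fin.last n)} := fun _ hx => hx _
  exact ⟨φ₀, φ, ψ₀, ψ, schwartzConv ψ₀ φ₀, schwartzConv ψ φ, hφ₀.trans hhalf, hφ.trans hhalf,
    hψ₀.trans hhalf, hψ.trans hhalf, hφ₀int, hψ₀int, hφmoment, hψmoment, hCalderon,
    schwartzConv_apply_swap ψ₀ φ₀, schwartzConv_apply_swap ψ φ, hk₀.trans hhalf, hk.trans hhalf,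
    hk₀int, hkmoment, hrepr⟩

end
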